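/- arXiv:2504.19140 — 3 statements merged into one kernel-verified Lean document; each statement's English description precedes it below -/
import Mathlib

section
/- Let x̂ ∈ ℂⁿ be non-vanishing with x̂[−k] = conj(x̂[k]), set P[k] = |x̂[k]|², P_max = max_k P[k], and x̃[k] = x̂[k]/|x̂[k]|. Let ρ̂ : {−2B,…,2B} → ℂ satisfy ρ̂[−k] = conj(ρ̂[k]). Set M₂ = 2π·D_x̃·T_ρ·D_x̃* and M₂^C = 2π·D_x̃·C_{v_opt}·D_x̃*. Let λ^T_0 ≥ … ≥ λ^T_{n−1} and λ^C_0 ≥ … ≥ λ^C_{n−1} be the eigenvalues, with multiplicity and in nonincreasing order, of the Hermitian matrices T_ρ and C_{v_opt} respectively, and fix an index κ such that both λ^T_κ and λ^C_κ have one-dimensional eigenspaces. Put δ_κ = max( min_{j≠κ} |λ^C_κ − λ^T_j| , min_{j≠κ} |λ^C_j − λ^T_κ| ) and assume S_B(ρ̂) ≤ δ_κ². Let v^T be a unit-norm eigenvector of M₂ for the eigenvalue 2πλ^T_κ, let l ∈ {0,…,n−1} be such that v^C := (1/√n)·Φ_{2πl/n}⊙x̃ is a unit-norm eigenvector of M₂^C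 for the eigenvalue 2πλ^C_κ, and let β ∈ ℂ with |β| = 1 be such that, setting x̃_est = β·√n·v^T, the number Σ_{k=−B}^{B} conj(x̃_est[k])·e^{−ι2πlk/n}·x̃[k] is a nonnegative real. Then ‖ √P ⊙ x̃_est − Φ_{2πl/n} ⊙ x̂ ‖² ≤ 2n·P_max·( 1 − √( 1 − S_B(ρ̂)/δ_κ² ) ), where √P is the entrywise square root of P. -/
/-!
A Davis–Kahan argument. Conjugation by the unitary `D_x̃` turns `v^T` and `v^C` into unit
eigenvectors `u` of `T_ρ` and `w` of `C_{v_opt}`. If `δ_κ` is the first of its two minima, expand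
`(T_ρ - λ^C_κ) w = (T_ρ - C_{v_opt}) w` in an eigenbasis of `T_ρ`: every component orthogonal to `u`
is multiplied by at least `δ_κ` in modulus, whence `δ_κ² (1 - |⟨u, w⟩|²) ≤ ‖T_ρ - C_{v_opt}‖²`. If
it is the second, exchange the two matrices. Moreover `δ_κ > 0`, since `δ_κ = 0` would force
`T_ρ = C_{v_opt}`, whose `κ`-th eigenvalue is isolated.

The Frobenius norm is computed along cyclic diagonals: on the `k`-th one, `T_ρ` takes the value
`ρ̂[k - n]` on `k` entries and `ρ̂[k]` on `n - k` entries, and `v_opt[k]` is their mean, so that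
`‖T_ρ - C_{v_opt}‖² = S_B(ρ̂)`. Finally, the phase `β` makes the overlap of the two normalized
signals equal to its modulus, so their distance is a function of `|⟨u, w⟩|` alone.
-/

open Complex Real ComplexConjugate

/-- The Toeplitz matrix `T_ρ[k₁,k₂] = ρ̂[k₁ - k₂]`, with indices `k = i - B ∈ {-B,…,B}`
for `i : Fin (2B+1)`. -/
noncomputable def Tmat (B : ℕ) (rhohat : ℤ → ℂ) :
    Matrix (Fin (2 * B + 1)) (Fin (2 * B + 1)) ℂ :=
  Matrix.of fun i j => rhohat (((i : ℕ) : ℤ) - ((j : ℕ) : ℤ))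

/-- The circulant matrix `C_v[k₁,k₂] = v[(k₁ - k₂) mod n]`, `n = 2B+1`. -/
noncomputable def Cmat (B : ℕ) (v : Fin (2 * B + 1) → ℂ) :
    Matrix (Fin (2 * B + 1)) (Fin (2 * B + 1)) ℂ :=
  Matrix.of fun i j => v (i - j)

/-- `v_opt[k] = (k·ρ̂[-(n-k)] + (n-k)·ρ̂[k]) / n`, `n = 2B+1`. -/
noncomputable def vopt (B : ℕ) (rhohat : ℤ → ℂ) : Fin (2 * B + 1) → ℂ :=
  fun k => ((((k : ℕ) : ℤ) : ℂ) * rhohat (-((2 * B + 1 : ℤ) - ((k : ℕ) : ℤ))) +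
      (((2 * B + 1 : ℤ) - ((k : ℕ) : ℤ) : ℤ) : ℂ) * rhohat ((k : ℕ) : ℤ)) /
    ((2 * B + 1 : ℕ) : ℂ)

/-- `S_B(ρ̂) = Σ_{k=1}^{n-1} |ρ̂[k] - ρ̂[-(n-k)]|² · k(n-k)/n`, `n = 2B+1`. -/
noncomputable def SB (B : ℕ) (rhohat : ℤ → ℂ) : ℝ :=
  ∑ k ∈ Finset.Icc (1 : ℤ) (2 * B : ℤ),
    ‖rhohat k - rhohat (-((2 * B + 1 : ℤ) - k))‖ ^ 2 *
      ((k * ((2 * B + 1 : ℤ) - k) : ℤ) : ℝ) / ((2 * B + 1 : ℕ) : ℝ)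

/-- The index of `-k` when `i : Fin (2B+1)` represents `k = i - B ∈ {-B,…,B}`. -/
def negIdx (B : ℕ) (i : Fin (2 * B + 1)) : Fin (2 * B + 1) :=
  ⟨2 * B - (i : ℕ), by omega⟩

/-- The angle `2πl·k/n` for the index `i : Fin (2B+1)` representing `k = i - B`. -/
noncomputable def phase (B l : ℕ) (i : Fin (2 * B + 1)) : ℝ :=
  2 * π * (l : ℝ) * (((((i : ℕ) : ℤ) - (B : ℤ)) : ℤ) : ℝ) / ((2 * B + 1 : ℕ) : ℝ)

open Matrix WithLp Module.End
open scoped InnerProductSpace Matrix.Norms.Frobenius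

section Perturbation

variable {𝕜 E ι : Type*} [RCLike 𝕜] [NormedAddCommGroup E] [InnerProductSpace 𝕜 E] [Fintype ι]

theorem inner_map_eq_mul_of_eigenbasis {f : Module.End 𝕜 E} (b : OrthonormalBasis ι 𝕜 E)
    {lam : ι → 𝕜} (hb : ∀ j, f (b j) = lam j • b j) (j : ι) (w : E) :
    ⟪b j, f w⟫_𝕜 = lam j * ⟪b j, w⟫_𝕜 := by
  classical
  conv_lhs => rw [← b.sum_repr' w]
  simp [hb, inner_sum, inner_smul_right, b.inner_eq_ite, mul_comm]

theorem sq_mul_norm_sq_sub_norm_inner_sq_le {f : Module.End 𝕜 E} (b : OrthonormalBasis ι 𝕜 E)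
    {lam : ι → 𝕜} (hb : ∀ j, f (b j) = lam j • b j) {κ : ι} {μ : 𝕜} {δ : ℝ} (hδ : 0 ≤ δ)
    (hgap : ∀ j, j ≠ κ → δ ≤ ‖lam j - μ‖) (w : E) :
    δ ^ 2 * (‖w‖ ^ 2 - ‖⟪b κ, w⟫_𝕜‖ ^ 2) ≤ ‖f w - μ • w‖ ^ 2 := by
  classical
  have hresidual (j : ι) : ⟪b j, f w - μ • w⟫_𝕜 = (lam j - μ) * ⟪b j, w⟫_𝕜 := by
    rw [inner_sub_right, inner_map_eq_mul_of_eigenbasis b hb, inner_smul_right, sub_mul]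
  calc δ ^ 2 * (‖w‖ ^ 2 - ‖⟪b κ, w⟫_𝕜‖ ^ 2)
      = ∑ j ∈ Finset.univ.erase κ, δ ^ 2 * ‖⟪b j, w⟫_𝕜‖ ^ 2 := by
        rw [← b.sum_sq_norm_inner_right w, ← Finset.add_sum_erase _ _ (Finset.mem_univ κ),
          add_sub_cancel_left, Finset.mul_sum]
    _ ≤ ∑ j ∈ Finset.univ.erase κ, ‖⟪b j, f w - μ • w⟫_𝕜‖ ^ 2 := by
        refine Finset.sum_le_sum fun j hj => ?_
        rw [hresidual, norm_mul, mul_pow]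
        gcongr
        exact hgap j (Finset.ne_of_mem_erase hj)
    _ ≤ ∑ j, ‖⟪b j, f w - μ • w⟫_𝕜‖ ^ 2 :=
        Finset.sum_le_univ_sum_of_nonneg fun j => by positivity
    _ = ‖f w - μ • w‖ ^ 2 := b.sum_sq_norm_inner_right _

theorem norm_inner_eq_norm_inner_of_finrank_eigenspace_eq_one {f : Module.End 𝕜 E} {μ : 𝕜}
    (hμ : Module.finrank 𝕜 (eigenspace f μ) = 1) {u e : E} (hu : f u = μ • u) (he : f e = μ • e)
    (hu1 : ‖u‖ = 1) (he1 : ‖e‖ = 1) (w : E) : ‖⟪u, w⟫_𝕜‖ = ‖⟪e, w⟫_𝕜‖ := by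
  let e' : eigenspace f μ := ⟨e, mem_eigenspace_iff.2 he⟩
  have he0 : e' ≠ 0 := by
    rw [ne_eq, Subtype.ext_iff]
    exact norm_ne_zero_iff.1 (he1 ▸ one_ne_zero)
  obtain ⟨c, hc⟩ := exists_smul_eq_of_finrank_eq_one hμ he0 ⟨u, mem_eigenspace_iff.2 hu⟩
  obtain rfl : c • e = u := congrArg Subtype.val hc
  have hc1 : ‖c‖ = 1 := by rwa [norm_smul, he1, mul_one] at hu1
  rw [inner_smul_left, norm_mul, RCLike.norm_conj, hc1, one_mul]

theorem norm_smul_sub_smul_sq {v w : E} (hv : ‖v‖ = 1) (hw : ‖w‖ = 1) {a c : 𝕜}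
    (hac : ‖a‖ = ‖c‖) (hpos : ∃ r : ℝ, 0 ≤ r ∧ ⟪a • v, c • w⟫_𝕜 = (r : 𝕜)) :
    ‖a • v - c • w‖ ^ 2 = 2 * ‖c‖ ^ 2 * (1 - ‖⟪v, w⟫_𝕜‖) := by
  obtain ⟨r, hr0, hr⟩ := hpos
  have hre : RCLike.re ⟪a • v, c • w⟫_𝕜 = ‖c‖ ^ 2 * ‖⟪v, w⟫_𝕜‖ := by
    calc RCLike.re ⟪a • v, c • w⟫_𝕜 = ‖⟪a • v, c • w⟫_𝕜‖ := by
          rw [hr, RCLike.ofReal_re, RCLike.norm_of_nonneg hr0]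
      _ = ‖c‖ ^ 2 * ‖⟪v, w⟫_𝕜‖ := by
          rw [inner_smul_left, inner_smul_right, norm_mul, norm_mul, RCLike.norm_conj, hac]; ring
  rw [norm_sub_sq (𝕜 := 𝕜), hre, norm_smul, norm_smul, hv, hw, hac]
  ring

end Perturbation

section Matrices

variable {𝕜 m ι : Type*} [RCLike 𝕜] [Fintype m] [Fintype ι]

theorem frobenius_norm_sq_eq_sum (A : Matrix m ι 𝕜) :
    ‖A‖ ^ 2 = ∑ i, ∑ j, ‖A i j‖ ^ 2 := by
  rw [frobenius_norm_def, ← Real.sqrt_eq_rpow, Real.sq_sqrt (by positivity)]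
  simp

variable [DecidableEq ι]

theorem finrank_eigenspace_toEuclideanLin (A : Matrix ι ι 𝕜) (μ : 𝕜) :
    Module.finrank 𝕜 (eigenspace (toEuclideanLin A) μ) =
      Module.finrank 𝕜 (eigenspace A.mulVecLin μ) := by
  have hmap : (eigenspace A.mulVecLin μ).map (WithLp.linearEquiv 2 𝕜 (ι → 𝕜)).symm.toLinearMap =
      eigenspace (toEuclideanLin A) μ := by
    ext x
    simp [Submodule.mem_map_equiv, toLpLin_apply, WithLp.ext_iff]
  rw [← hmap]
  exact LinearEquiv.finrank_map_eq (WithLp.linearEquiv 2 𝕜 (ι → 𝕜)).symm _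

theorem norm_toEuclideanLin_apply_le_frobenius (A : Matrix m ι 𝕜) (v : EuclideanSpace 𝕜 ι) :
    ‖toEuclideanLin A v‖ ≤ ‖A‖ * ‖v‖ := by
  have h := frobenius_norm_mul A (replicateCol Unit v.ofLp)
  rwa [← replicateCol_mulVec, frobenius_norm_replicateCol, frobenius_norm_replicateCol] at h

theorem diagonal_mem_unitaryGroup {d : ι → 𝕜} (hd : ∀ i, ‖d i‖ = 1) :
    diagonal d ∈ unitaryGroup ι 𝕜 := by
  rw [mem_unitaryGroup_iff, star_eq_conjTranspose, diagonal_conjTranspose, diagonal_mul_diagonal,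
    ← diagonal_one]
  congr 1
  ext i
  simp [RCLike.mul_conj, hd]

theorem mulVec_conjTranspose_mulVec_of_unitary {U A : Matrix ι ι 𝕜} (hU : U ∈ unitaryGroup ι 𝕜)
    {v : ι → 𝕜} {c μ : 𝕜} (hc : c ≠ 0) (hv : (c • (U * A * Uᴴ)) *ᵥ v = (c * μ) • v) :
    A *ᵥ Uᴴ *ᵥ v = μ • Uᴴ *ᵥ v := by
  rw [smul_mulVec, mul_smul, smul_right_inj hc] at hv
  rw [← mulVec_smul, ← hv, mulVec_mulVec, mulVec_mulVec, ← Matrix.mul_assoc, ← Matrix.mul_assoc,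
    ← star_eq_conjTranspose, mem_unitaryGroup_iff'.1 hU, Matrix.one_mul]

theorem inner_toLp_conjTranspose_mulVec {U : Matrix ι ι 𝕜} (hU : U ∈ unitaryGroup ι 𝕜)
    (v w : ι → 𝕜) : ⟪toLp 2 (Uᴴ *ᵥ v), toLp 2 (Uᴴ *ᵥ w)⟫_𝕜 = ⟪toLp 2 v, toLp 2 w⟫_𝕜 := by
  rw [EuclideanSpace.inner_toLp_toLp, EuclideanSpace.inner_toLp_toLp, star_mulVec,
    conjTranspose_conjTranspose, dotProduct_comm, ← dotProduct_mulVec, mulVec_mulVec,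
    ← star_eq_conjTranspose, mem_unitaryGroup_iff.1 hU, one_mulVec, dotProduct_comm]

end Matrices

section Eigenvalues

variable {𝕜 : Type*} [RCLike 𝕜] {n : ℕ}

theorem eq_of_antitone_of_prod_X_sub_C_eq {f g : Fin n → ℝ} (hf : Antitone f) (hg : Antitone g)
    (h : ∏ i, (Polynomial.X - Polynomial.C (f i : 𝕜)) =
      ∏ i, (Polynomial.X - Polynomial.C (g i : 𝕜))) : f = g := by
  have hroots (f : Fin n → ℝ) :
      (∏ i, (Polynomial.X - Polynomial.C (f i : 𝕜))).roots.map RCLike.re =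
        (List.ofFn f : Multiset ℝ) := by
    rw [Polynomial.roots_prod _ _
      (Finset.prod_ne_zero_iff.2 fun i _ => Polynomial.X_sub_C_ne_zero _)]
    simp [Fin.univ_val_map, Function.comp_def]
  have hperm : (List.ofFn f).Perm (List.ofFn g) := by
    rw [← Multiset.coe_eq_coe, ← hroots, ← hroots, h]
  exact List.ofFn_injective (hperm.eq_of_sortedGE hf.sortedGE_ofFn hg.sortedGE_ofFn)

theorem exists_eigenbasis_of_charpoly_eq {A : Matrix (Fin n) (Fin n) 𝕜} (hA : A.IsHermitian)
    {lam : Fin n → ℝ} (hlam : Antitone lam)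
    (hchar : A.charpoly = ∏ i, (Polynomial.X - Polynomial.C (lam i : 𝕜))) :
    ∃ b : OrthonormalBasis (Fin n) 𝕜 (EuclideanSpace 𝕜 (Fin n)),
      ∀ j, toEuclideanLin A (b j) = (lam j : 𝕜) • b j := by
  let σ := Tuple.sort (OrderDual.toDual ∘ hA.eigenvalues)
  have hsorted : Antitone (hA.eigenvalues ∘ σ) :=
    Tuple.monotone_sort (OrderDual.toDual ∘ hA.eigenvalues)
  have heq : hA.eigenvalues ∘ σ = lam := by
    refine eq_of_antitone_of_prod_X_sub_C_eq (𝕜 := 𝕜) hsorted hlam ?_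
    rw [← hchar, hA.charpoly_eq]
    exact Equiv.prod_comp σ fun i => Polynomial.X - Polynomial.C (hA.eigenvalues i : 𝕜)
  refine ⟨hA.eigenvectorBasis.reindex σ.symm, fun j => ?_⟩
  rw [OrthonormalBasis.reindex_apply, Equiv.symm_symm, ← heq, toLpLin_apply,
    hA.mulVec_eigenvectorBasis, RCLike.real_smul_eq_coe_smul (K := 𝕜)]
  rfl

theorem ne_of_finrank_eigenspace_eq_one {A : Matrix (Fin n) (Fin n) 𝕜} (hA : A.IsHermitian)
    {lam : Fin n → ℝ} (hlam : Antitone lam)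
    (hchar : A.charpoly = ∏ i, (Polynomial.X - Polynomial.C (lam i : 𝕜))) {κ : Fin n}
    (hκ : Module.finrank 𝕜 (eigenspace (toEuclideanLin A) (lam κ : 𝕜)) = 1) {j : Fin n}
    (hj : j ≠ κ) : lam j ≠ lam κ := by
  obtain ⟨b, hb⟩ := exists_eigenbasis_of_charpoly_eq hA hlam hchar
  intro heq
  have h := norm_inner_eq_norm_inner_of_finrank_eigenspace_eq_one hκ (heq ▸ hb j) (hb κ)
    (b.norm_eq_one j) (b.norm_eq_one κ) (b j)
  simp [b.inner_eq_ite, hj.symm] at h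

theorem sq_mul_one_sub_norm_inner_sq_le_frobenius {A A' : Matrix (Fin n) (Fin n) 𝕜}
    (hA : A.IsHermitian) {lam : Fin n → ℝ} (hlam : Antitone lam)
    (hchar : A.charpoly = ∏ i, (Polynomial.X - Polynomial.C (lam i : 𝕜))) {κ : Fin n}
    (hκ : Module.finrank 𝕜 (eigenspace (toEuclideanLin A) (lam κ : 𝕜)) = 1)
    {u w : EuclideanSpace 𝕜 (Fin n)} {μ δ : ℝ}
    (hu : toEuclideanLin A u = (lam κ : 𝕜) • u) (hw : toEuclideanLin A' w = (μ : 𝕜) • w)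
    (hu1 : ‖u‖ = 1) (hw1 : ‖w‖ = 1) (hδ : 0 ≤ δ) (hgap : ∀ j, j ≠ κ → δ ≤ |lam j - μ|) :
    δ ^ 2 * (1 - ‖⟪u, w⟫_𝕜‖ ^ 2) ≤ ‖A - A'‖ ^ 2 := by
  obtain ⟨b, hb⟩ := exists_eigenbasis_of_charpoly_eq hA hlam hchar
  have hgap' (j : Fin n) (hj : j ≠ κ) : δ ≤ ‖(lam j : 𝕜) - (μ : 𝕜)‖ := by
    rw [← RCLike.ofReal_sub, RCLike.norm_ofReal]
    exact hgap j hj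
  calc δ ^ 2 * (1 - ‖⟪u, w⟫_𝕜‖ ^ 2)
      = δ ^ 2 * (‖w‖ ^ 2 - ‖⟪b κ, w⟫_𝕜‖ ^ 2) := by
        rw [hw1, one_pow, norm_inner_eq_norm_inner_of_finrank_eigenspace_eq_one hκ hu (hb κ) hu1
          (b.norm_eq_one κ) w]
    _ ≤ ‖toEuclideanLin A w - (μ : 𝕜) • w‖ ^ 2 :=
        sq_mul_norm_sq_sub_norm_inner_sq_le b hb hδ hgap' w
    _ = ‖toEuclideanLin (A - A') w‖ ^ 2 := by rw [← hw, map_sub, LinearMap.sub_apply]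
    _ ≤ (‖A - A'‖ * ‖w‖) ^ 2 := by gcongr; exact norm_toEuclideanLin_apply_le_frobenius _ _
    _ = ‖A - A'‖ ^ 2 := by rw [hw1, mul_one]

end Eigenvalues

section Eigengap

variable {ι : Type*}

/-- The separation `δ_κ` of the `κ`-th eigenvalues of two Hermitian matrices with eigenvalue
enumerations `lamT` and `lamC`. The infima are minima as soon as `ι` is finite with at least two
elements; over a one-element `ι` both are `sInf ∅ = 0`. -/
noncomputable def eigengap (lamT lamC : ι → ℝ) (κ : ι) : ℝ :=
  max (sInf {r : ℝ | ∃ j, j ≠ κ ∧ r = |lamC κ - lamT j|})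
    (sInf {r : ℝ | ∃ j, j ≠ κ ∧ r = |lamC j - lamT κ|})

theorem eigengap_nonneg (lamT lamC : ι → ℝ) (κ : ι) : 0 ≤ eigengap lamT lamC κ :=
  le_max_of_le_left <| Real.sInf_nonneg <| by rintro _ ⟨j, -, rfl⟩; exact abs_nonneg _

theorem sInf_abs_le (f : ι → ℝ) {κ j : ι} (hj : j ≠ κ) :
    sInf {r : ℝ | ∃ j, j ≠ κ ∧ r = |f j|} ≤ |f j| :=
  csInf_le ⟨0, by rintro _ ⟨i, -, rfl⟩; exact abs_nonneg _⟩ ⟨j, hj, rfl⟩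

theorem eigengap_le_abs_sub_or (lamT lamC : ι → ℝ) (κ : ι) :
    (∀ j, j ≠ κ → eigengap lamT lamC κ ≤ |lamT j - lamC κ|) ∨
      ∀ j, j ≠ κ → eigengap lamT lamC κ ≤ |lamC j - lamT κ| := by
  rcases max_choice (sInf {r : ℝ | ∃ j, j ≠ κ ∧ r = |lamC κ - lamT j|})
    (sInf {r : ℝ | ∃ j, j ≠ κ ∧ r = |lamC j - lamT κ|}) with hmax | hmax
  · refine Or.inl fun j hj => ?_
    rw [eigengap, hmax, abs_sub_comm]
    exact sInf_abs_le (fun j => lamC κ - lamT j) hj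
  · refine Or.inr fun j hj => ?_
    rw [eigengap, hmax]
    exact sInf_abs_le (fun j => lamC j - lamT κ) hj

theorem eigengap_self_pos [Finite ι] [Nontrivial ι] {lam : ι → ℝ} {κ : ι}
    (hκ : ∀ j, j ≠ κ → lam j ≠ lam κ) : 0 < eigengap lam lam κ := by
  obtain ⟨i, hi⟩ := exists_ne κ
  have hfinite : {r : ℝ | ∃ j, j ≠ κ ∧ r = |lam κ - lam j|}.Finite :=
    (Set.finite_range fun j => |lam κ - lam j|).subset <| by
      rintro _ ⟨j, -, rfl⟩; exact ⟨j, rfl⟩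
  obtain ⟨j, hj, hmin⟩ := Set.Nonempty.csInf_mem (s := {r : ℝ | ∃ j, j ≠ κ ∧ r = |lam κ - lam j|})
    ⟨_, i, hi, rfl⟩ hfinite
  refine lt_max_of_lt_left ?_
  rw [hmin, abs_pos, sub_ne_zero]
  exact (hκ j hj).symm

end Eigengap

section SinTheta

variable {𝕜 : Type*} [RCLike 𝕜] {n : ℕ} {T C : Matrix (Fin n) (Fin n) 𝕜} {lamT lamC : Fin n → ℝ}
  {κ : Fin n}

theorem eigengap_pos_of_frobenius_sq_le [Nontrivial (Fin n)] (hT : T.IsHermitian)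
    (hlamT : Antitone lamT) (hlamC : Antitone lamC)
    (hTchar : T.charpoly = ∏ i, (Polynomial.X - Polynomial.C (lamT i : 𝕜)))
    (hCchar : C.charpoly = ∏ i, (Polynomial.X - Polynomial.C (lamC i : 𝕜)))
    (hκT : Module.finrank 𝕜 (eigenspace (toEuclideanLin T) (lamT κ : 𝕜)) = 1)
    (hTC : ‖T - C‖ ^ 2 ≤ eigengap lamT lamC κ ^ 2) : 0 < eigengap lamT lamC κ := by
  rcases eq_or_ne T C with rfl | hne
  · obtain rfl : lamT = lamC :=
      eq_of_antitone_of_prod_X_sub_C_eq hlamT hlamC (hTchar.symm.trans hCchar)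
    exact eigengap_self_pos fun j => ne_of_finrank_eigenspace_eq_one hT hlamT hTchar hκT
  · exact (norm_sub_pos_iff.2 hne).trans_le
      ((sq_le_sq₀ (norm_nonneg _) (eigengap_nonneg _ _ _)).1 hTC)

theorem sqrt_one_sub_frobenius_div_eigengap_le_norm_inner [Nontrivial (Fin n)]
    (hT : T.IsHermitian) (hC : C.IsHermitian) (hlamT : Antitone lamT) (hlamC : Antitone lamC)
    (hTchar : T.charpoly = ∏ i, (Polynomial.X - Polynomial.C (lamT i : 𝕜)))
    (hCchar : C.charpoly = ∏ i, (Polynomial.X - Polynomial.C (lamC i : 𝕜)))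
    (hκT : Module.finrank 𝕜 (eigenspace (toEuclideanLin T) (lamT κ : 𝕜)) = 1)
    (hκC : Module.finrank 𝕜 (eigenspace (toEuclideanLin C) (lamC κ : 𝕜)) = 1)
    (hTC : ‖T - C‖ ^ 2 ≤ eigengap lamT lamC κ ^ 2) {u w : EuclideanSpace 𝕜 (Fin n)}
    (hu : toEuclideanLin T u = (lamT κ : 𝕜) • u) (hw : toEuclideanLin C w = (lamC κ : 𝕜) • w)
    (hu1 : ‖u‖ = 1) (hw1 : ‖w‖ = 1) :
    √(1 - ‖T - C‖ ^ 2 / eigengap lamT lamC κ ^ 2) ≤ ‖⟪u, w⟫_𝕜‖ := by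
  have hpos := eigengap_pos_of_frobenius_sq_le hT hlamT hlamC hTchar hCchar hκT hTC
  have hsin : eigengap lamT lamC κ ^ 2 * (1 - ‖⟪u, w⟫_𝕜‖ ^ 2) ≤ ‖T - C‖ ^ 2 := by
    rcases eigengap_le_abs_sub_or lamT lamC κ with hgap | hgap
    · exact sq_mul_one_sub_norm_inner_sq_le_frobenius hT hlamT hTchar hκT hu hw hu1 hw1 hpos.le hgap
    · rw [norm_inner_symm, norm_sub_rev]
      exact sq_mul_one_sub_norm_inner_sq_le_frobenius hC hlamC hCchar hκC hw hu hw1 hu1 hpos.le hgap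
  refine Real.sqrt_le_iff.2 ⟨norm_nonneg _, ?_⟩
  rw [← le_div_iff₀' (by positivity)] at hsin
  linarith

theorem sqrt_one_sub_frobenius_div_eigengap_le_norm_inner_of_unitary [Nontrivial (Fin n)]
    (hT : T.IsHermitian) (hC : C.IsHermitian) (hlamT : Antitone lamT) (hlamC : Antitone lamC)
    (hTchar : T.charpoly = ∏ i, (Polynomial.X - Polynomial.C (lamT i : 𝕜)))
    (hCchar : C.charpoly = ∏ i, (Polynomial.X - Polynomial.C (lamC i : 𝕜)))
    (hκT : Module.finrank 𝕜 (eigenspace T.mulVecLin (lamT κ : 𝕜)) = 1)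
    (hκC : Module.finrank 𝕜 (eigenspace C.mulVecLin (lamC κ : 𝕜)) = 1)
    (hTC : ‖T - C‖ ^ 2 ≤ eigengap lamT lamC κ ^ 2) {U : Matrix (Fin n) (Fin n) 𝕜}
    (hU : U ∈ unitaryGroup (Fin n) 𝕜) {c : 𝕜} (hc : c ≠ 0) {v w : Fin n → 𝕜}
    (hv : (c • (U * T * Uᴴ)) *ᵥ v = (c * lamT κ) • v)
    (hw : (c • (U * C * Uᴴ)) *ᵥ w = (c * lamC κ) • w)
    (hv1 : ‖toLp 2 v‖ = 1) (hw1 : ‖toLp 2 w‖ = 1) :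
    √(1 - ‖T - C‖ ^ 2 / eigengap lamT lamC κ ^ 2) ≤ ‖⟪toLp 2 v, toLp 2 w⟫_𝕜‖ := by
  have hnorm (z : Fin n → 𝕜) : ‖toLp 2 (Uᴴ *ᵥ z)‖ = ‖toLp 2 z‖ := by
    rw [@norm_eq_sqrt_re_inner 𝕜, @norm_eq_sqrt_re_inner 𝕜, inner_toLp_conjTranspose_mulVec hU]
  rw [← finrank_eigenspace_toEuclideanLin] at hκT hκC
  rw [← inner_toLp_conjTranspose_mulVec hU]
  exact sqrt_one_sub_frobenius_div_eigengap_le_norm_inner hT hC hlamT hlamC hTchar hCchar hκT hκC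
    hTC (congrArg (toLp 2) (mulVec_conjTranspose_mulVec_of_unitary hU hc hv))
    (congrArg (toLp 2) (mulVec_conjTranspose_mulVec_of_unitary hU hc hw))
    ((hnorm v).trans hv1) ((hnorm w).trans hw1)

end SinTheta

section ToeplitzCirculant

variable {B : ℕ} {rhohat : ℤ → ℂ}

theorem Tmat_isHermitian
    (hρ : ∀ k ∈ Finset.Icc (-(2 * B : ℤ)) (2 * B : ℤ), rhohat (-k) = conj (rhohat k)) :
    (Tmat B rhohat).IsHermitian := by
  ext i j
  rw [conjTranspose_apply, Tmat, of_apply, of_apply, ← starRingEnd_apply,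
    ← hρ _ (by rw [Finset.mem_Icc]; omega), neg_sub]

theorem conj_vopt_neg
    (hρ : ∀ k ∈ Finset.Icc (-(2 * B : ℤ)) (2 * B : ℤ), rhohat (-k) = conj (rhohat k))
    (k : Fin (2 * B + 1)) : conj (vopt B rhohat (-k)) = vopt B rhohat k := by
  rcases eq_or_ne k 0 with rfl | hk
  · have hρ0 : conj (rhohat 0) = rhohat 0 := by simpa using (hρ 0 (by simp)).symm
    simp [vopt, hρ0, Complex.conj_ofNat]
  · have hk0 : (k : ℕ) ≠ 0 := Fin.val_ne_zero_iff.2 hk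
    have hneg : (((-k : Fin (2 * B + 1)) : ℕ) : ℤ) = 2 * B + 1 - (k : ℕ) := by
      rw [Fin.val_neg', Nat.mod_eq_of_lt (by omega)]
      omega
    have hconj_sub := hρ (2 * B + 1 - (k : ℕ)) (by rw [Finset.mem_Icc]; omega)
    have hconj_neg := hρ (-(k : ℕ)) (by rw [Finset.mem_Icc]; omega)
    simp only [vopt, hneg, sub_sub_cancel, map_div₀, map_add, map_mul, Complex.conj_natCast,
      map_intCast, ← hconj_sub, ← hconj_neg, neg_neg]
    ring

theorem Cmat_vopt_isHermitian
    (hρ : ∀ k ∈ Finset.Icc (-(2 * B : ℤ)) (2 * B : ℤ), rhohat (-k) = conj (rhohat k)) :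
    (Cmat B (vopt B rhohat)).IsHermitian := by
  ext i j
  rw [conjTranspose_apply, Cmat, of_apply, of_apply, ← starRingEnd_apply, ← neg_sub i j,
    conj_vopt_neg hρ]

theorem add_mul_norm_sub_weighted_mean_sq {E : Type*} [NormedAddCommGroup E] [NormedSpace ℝ E]
    {s t : ℝ} (hst : s + t ≠ 0) {a b m : E} (hm : (s + t) • m = s • a + t • b) :
    s * ‖a - m‖ ^ 2 + t * ‖b - m‖ ^ 2 = ‖b - a‖ ^ 2 * (s * t) / (s + t) := by
  have ha : (s + t) • (a - m) = (-t) • (b - a) := by rw [smul_sub, hm]; module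
  have hb : (s + t) • (b - m) = s • (b - a) := by rw [smul_sub, hm]; module
  have hna : (s + t) ^ 2 * ‖a - m‖ ^ 2 = t ^ 2 * ‖b - a‖ ^ 2 := by
    rw [← sq_abs (s + t), ← mul_pow, ← Real.norm_eq_abs, ← norm_smul, ha, norm_smul, mul_pow,
      Real.norm_eq_abs, sq_abs, neg_sq]
  have hnb : (s + t) ^ 2 * ‖b - m‖ ^ 2 = s ^ 2 * ‖b - a‖ ^ 2 := by
    rw [← sq_abs (s + t), ← mul_pow, ← Real.norm_eq_abs, ← norm_smul, hb, norm_smul, mul_pow,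
      Real.norm_eq_abs, sq_abs]
  rw [eq_div_iff hst]
  refine mul_left_cancel₀ hst ?_
  linear_combination s * hna + t * hnb

theorem Tmat_apply_sub (B : ℕ) (rhohat : ℤ → ℂ) (i k : Fin (2 * B + 1)) :
    Tmat B rhohat i (i - k) =
      if i < k then rhohat (-((2 * B + 1 : ℤ) - (k : ℕ))) else rhohat (k : ℕ) := by
  rw [Tmat, of_apply]
  split_ifs with hik
  · congr 1
    have := Fin.coe_sub_iff_lt.2 hik
    omega
  · congr 1
    have := Fin.sub_val_of_le (not_lt.1 hik)
    omega

theorem sum_norm_Tmat_sub_Cmat_vopt_diagonal_sq (B : ℕ) (rhohat : ℤ → ℂ) (k : Fin (2 * B + 1)) :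
    ∑ i, ‖(Tmat B rhohat - Cmat B (vopt B rhohat)) i (i - k)‖ ^ 2 =
      ‖rhohat (k : ℕ) - rhohat (-((2 * B + 1 : ℤ) - (k : ℕ)))‖ ^ 2 *
        (((k : ℕ) * ((2 * B + 1 : ℤ) - (k : ℕ)) : ℤ) : ℝ) / ((2 * B + 1 : ℕ) : ℝ) := by
  have hcard : (((2 * B + 1 - k : ℕ) : ℕ) : ℝ) = (2 * B + 1 : ℕ) - (k : ℕ) :=
    Nat.cast_sub k.isLt.le
  have hn : (k : ℝ) + ((2 * B + 1 - k : ℕ) : ℕ) = (2 * B + 1 : ℕ) := by rw [hcard]; ring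
  have hn0 : ((2 * B + 1 : ℕ) : ℝ) ≠ 0 := by positivity
  have hmean : ((2 * B + 1 : ℕ) : ℝ) • vopt B rhohat k =
      (k : ℝ) • rhohat (-((2 * B + 1 : ℤ) - (k : ℕ))) +
        ((2 * B + 1 - k : ℕ) : ℝ) • rhohat (k : ℕ) := by
    rw [hcard, vopt, Complex.real_smul, Complex.real_smul, Complex.real_smul,
      Complex.ofReal_natCast, mul_div_cancel₀ _ (by exact_mod_cast hn0)]
    push_cast
    ring
  have hentry (i : Fin (2 * B + 1)) :
      ‖(Tmat B rhohat - Cmat B (vopt B rhohat)) i (i - k)‖ ^ 2 =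
        if i < k then ‖rhohat (-((2 * B + 1 : ℤ) - (k : ℕ))) - vopt B rhohat k‖ ^ 2
        else ‖rhohat (k : ℕ) - vopt B rhohat k‖ ^ 2 := by
    rw [Matrix.sub_apply, Tmat_apply_sub, Cmat, of_apply, sub_sub_cancel]
    split_ifs <;> rfl
  rw [← hn] at hmean
  simp_rw [hentry, Finset.sum_ite, Finset.sum_const, nsmul_eq_mul, not_lt, Finset.filter_gt_eq_Iio,
    Finset.filter_le_eq_Ici, Fin.card_Iio, Fin.card_Ici]
  rw [add_mul_norm_sub_weighted_mean_sq (hn ▸ hn0) hmean, hn, hcard]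
  push_cast
  rfl

theorem SB_eq_sum_fin (B : ℕ) (rhohat : ℤ → ℂ) :
    SB B rhohat = ∑ k : Fin (2 * B + 1),
      ‖rhohat (k : ℕ) - rhohat (-((2 * B + 1 : ℤ) - (k : ℕ)))‖ ^ 2 *
        (((k : ℕ) * ((2 * B + 1 : ℤ) - (k : ℕ)) : ℤ) : ℝ) / ((2 * B + 1 : ℕ) : ℝ) := by
  rw [Fin.sum_univ_succ]
  simp only [Fin.val_zero, Nat.cast_zero, zero_mul, Int.cast_zero, mul_zero, zero_div, zero_add]
  symm
  refine Finset.sum_bij (fun k _ => ((k.succ : ℕ) : ℤ)) ?_ ?_ ?_ fun _ _ => rfl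
  · intro k _
    rw [Finset.mem_Icc, Fin.val_succ]
    omega
  · intro a _ b _ hab
    simpa [Fin.ext_iff] using hab
  · intro m hm
    rw [Finset.mem_Icc] at hm
    exact ⟨⟨(m - 1).toNat, by omega⟩, Finset.mem_univ _, by rw [Fin.val_succ]; simp; omega⟩

theorem frobenius_norm_Tmat_sub_Cmat_vopt_sq (B : ℕ) (rhohat : ℤ → ℂ) :
    ‖Tmat B rhohat - Cmat B (vopt B rhohat)‖ ^ 2 = SB B rhohat := by
  set D := Tmat B rhohat - Cmat B (vopt B rhohat) with hD
  calc ‖D‖ ^ 2 = ∑ i, ∑ j, ‖D i j‖ ^ 2 := frobenius_norm_sq_eq_sum D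
    _ = ∑ i, ∑ k, ‖D i (i - k)‖ ^ 2 := Finset.sum_congr rfl fun i _ =>
        (Equiv.sum_comp (Equiv.subLeft i) fun j => ‖D i j‖ ^ 2).symm
    _ = ∑ k, ∑ i, ‖D i (i - k)‖ ^ 2 := Finset.sum_comm
    _ = SB B rhohat := by
        simp_rw [hD, sum_norm_Tmat_sub_Cmat_vopt_diagonal_sq, SB_eq_sum_fin]

end ToeplitzCirculant

section PhaseRetrieval

variable {𝕜 ι : Type*} [RCLike 𝕜] [Fintype ι] {n : ℕ}

theorem norm_toLp_inv_sqrt_mul [NeZero n] {w : Fin n → 𝕜} (hw : ∀ i, ‖w i‖ = 1) :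
    ‖toLp 2 fun i => ((1 / √n : ℝ) : 𝕜) * w i‖ = 1 := by
  simp [EuclideanSpace.norm_eq, hw, NeZero.ne n]

theorem sum_norm_mul_sq_le {a z : ι → 𝕜} {P : ℝ} (ha : ∀ i, ‖a i‖ ^ 2 ≤ P) :
    ∑ i, ‖a i * z i‖ ^ 2 ≤ P * ∑ i, ‖z i‖ ^ 2 := by
  rw [Finset.mul_sum]
  refine Finset.sum_le_sum fun i _ => ?_
  rw [norm_mul, mul_pow]
  gcongr
  exact ha i

theorem sum_norm_sqrt_mul_sub_sq [NeZero n] {v w : Fin n → 𝕜} (hv : ‖toLp 2 v‖ = 1)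
    (hw : ∀ i, ‖w i‖ = 1) {β : 𝕜} (hβ : ‖β‖ = 1)
    (hpos : ∃ r : ℝ, 0 ≤ r ∧ ∑ i, conj (β * ((√n : ℝ) : 𝕜) * v i) * w i = (r : 𝕜)) :
    ∑ i, ‖β * ((√n : ℝ) : 𝕜) * v i - w i‖ ^ 2 =
      2 * n * (1 - ‖⟪toLp 2 v, toLp 2 fun i => ((1 / √n : ℝ) : 𝕜) * w i⟫_𝕜‖) := by
  set s : 𝕜 := ((√n : ℝ) : 𝕜) with hs
  set u : Fin n → 𝕜 := fun i => ((1 / √n : ℝ) : 𝕜) * w i with hu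
  have hsw : s • toLp 2 u = toLp 2 w := by
    ext i
    have hs0 : s ≠ 0 := by simp [hs, NeZero.ne n]
    simp [hu, ← hs, hs0]
  have hsnorm : ‖s‖ ^ 2 = n := by simp [hs]
  have hinner : ⟪(β * s) • toLp 2 v, s • toLp 2 u⟫_𝕜 = ∑ i, conj (β * s * v i) * w i := by
    simp [hsw, PiLp.inner_apply, mul_comm]
  rw [← hsnorm, ← norm_smul_sub_smul_sq hv (norm_toLp_inv_sqrt_mul hw) (a := β * s)
    (by rw [norm_mul, hβ, one_mul]) (hinner ▸ hpos), hsw, EuclideanSpace.norm_sq_eq]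
  rfl

theorem stmt_5_general [Nontrivial (Fin n)] {T C : Matrix (Fin n) (Fin n) 𝕜}
    (hT : T.IsHermitian) (hC : C.IsHermitian) {lamT lamC : Fin n → ℝ}
    (hlamT : Antitone lamT) (hlamC : Antitone lamC)
    (hTchar : T.charpoly = ∏ i, (Polynomial.X - Polynomial.C (lamT i : 𝕜)))
    (hCchar : C.charpoly = ∏ i, (Polynomial.X - Polynomial.C (lamC i : 𝕜))) {κ : Fin n}
    (hκT : Module.finrank 𝕜 (eigenspace T.mulVecLin (lamT κ : 𝕜)) = 1)
    (hκC : Module.finrank 𝕜 (eigenspace C.mulVecLin (lamC κ : 𝕜)) = 1)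
    (hTC : ‖T - C‖ ^ 2 ≤ eigengap lamT lamC κ ^ 2)
    {x xt Φ : Fin n → 𝕜} (hxt : ∀ i, ‖xt i‖ = 1) (hx : ∀ i, x i = (‖x i‖ : 𝕜) * xt i)
    (hΦ : ∀ i, ‖Φ i‖ = 1) {P : ℝ} (hP : ∀ i, ‖x i‖ ^ 2 ≤ P) {c : 𝕜} (hc : c ≠ 0)
    {vT vC : Fin n → 𝕜}
    (hvT : (c • (diagonal xt * T * (diagonal xt)ᴴ)) *ᵥ vT = (c * lamT κ) • vT)
    (hvTnorm : ∑ i, ‖vT i‖ ^ 2 = 1) (hvC : ∀ i, vC i = ((1 / √n : ℝ) : 𝕜) * Φ i * xt i)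
    (hvCeig : (c • (diagonal xt * C * (diagonal xt)ᴴ)) *ᵥ vC = (c * lamC κ) • vC)
    {β : 𝕜} (hβ : ‖β‖ = 1) {xest : Fin n → 𝕜}
    (hxest : ∀ i, xest i = β * ((√n : ℝ) : 𝕜) * vT i)
    (hpos : ∃ r : ℝ, 0 ≤ r ∧ ∑ i, conj (xest i) * (Φ i * xt i) = (r : 𝕜)) :
    ∑ i, ‖(‖x i‖ : 𝕜) * xest i - Φ i * x i‖ ^ 2 ≤
      2 * n * P * (1 - √(1 - ‖T - C‖ ^ 2 / eigengap lamT lamC κ ^ 2)) := by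
  have : NeZero n := ⟨by rintro rfl; exact not_nontrivial _ ‹_›⟩
  have hΦxt (i : Fin n) : ‖Φ i * xt i‖ = 1 := by rw [norm_mul, hΦ, hxt, one_mul]
  have hP0 : 0 ≤ P := (sq_nonneg _).trans (hP 0)
  have hvT1 : ‖toLp 2 vT‖ = 1 := by rw [EuclideanSpace.norm_eq, hvTnorm, Real.sqrt_one]
  obtain rfl : vC = fun i => ((1 / √n : ℝ) : 𝕜) * (Φ i * xt i) :=
    funext fun i => (hvC i).trans (mul_assoc _ _ _)
  obtain rfl : xest = fun i => β * ((√n : ℝ) : 𝕜) * vT i := funext hxest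
  calc ∑ i, ‖(‖x i‖ : 𝕜) * (β * ((√n : ℝ) : 𝕜) * vT i) - Φ i * x i‖ ^ 2
      = ∑ i, ‖(‖x i‖ : 𝕜) * (β * ((√n : ℝ) : 𝕜) * vT i - Φ i * xt i)‖ ^ 2 := by
        refine Finset.sum_congr rfl fun i _ => ?_
        rw [mul_sub, mul_left_comm _ (Φ i), ← hx]
    _ ≤ P * ∑ i, ‖β * ((√n : ℝ) : 𝕜) * vT i - Φ i * xt i‖ ^ 2 :=
        sum_norm_mul_sq_le fun i => by rw [norm_algebraMap', norm_norm]; exact hP i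
    _ = 2 * n * P *
          (1 - ‖⟪toLp 2 vT, toLp 2 fun i => ((1 / √n : ℝ) : 𝕜) * (Φ i * xt i)⟫_𝕜‖) := by
        rw [sum_norm_sqrt_mul_sub_sq hvT1 hΦxt hβ hpos]; ring
    _ ≤ 2 * n * P * (1 - √(1 - ‖T - C‖ ^ 2 / eigengap lamT lamC κ ^ 2)) := by
        gcongr
        exact sqrt_one_sub_frobenius_div_eigengap_le_norm_inner_of_unitary hT hC hlamT hlamC
          hTchar hCchar hκT hκC hTC (diagonal_mem_unitaryGroup hxt) hc hvT hvCeig hvT1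
          (norm_toLp_inv_sqrt_mul hΦxt)

end PhaseRetrieval

/-- Theorem 3 of the paper: error bound of the 1-D spectral algorithm.
The eigenvalues (with multiplicity, in nonincreasing order) of the Hermitian matrices
`T_ρ` and `C_{v_opt}` are encoded by their characteristic polynomials. -/
theorem stmt_5 (B : ℕ) (hB : 1 ≤ B)
    (xhat : Fin (2 * B + 1) → ℂ)
    (hxnv : ∀ i, xhat i ≠ 0)
    (hxsym : ∀ i, xhat (negIdx B i) = conj (xhat i))
    (xt : Fin (2 * B + 1) → ℂ) (hxt : ∀ i, xt i = xhat i / ((‖xhat i‖ : ℝ) : ℂ))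
    (Pmax : ℝ)
    (hPmax : Pmax = Finset.univ.sup' ⟨⟨0, by omega⟩, Finset.mem_univ _⟩
      (fun i : Fin (2 * B + 1) => ‖xhat i‖ ^ 2))
    (rhohat : ℤ → ℂ)
    (hρsym : ∀ k ∈ Finset.Icc (-(2 * B : ℤ)) (2 * B : ℤ), rhohat (-k) = conj (rhohat k))
    (M₂ M₂C : Matrix (Fin (2 * B + 1)) (Fin (2 * B + 1)) ℂ)
    (hM₂ : M₂ = ((2 * π : ℝ) : ℂ) •
      (Matrix.diagonal xt * Tmat B rhohat * (Matrix.diagonal xt).conjTranspose))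
    (hM₂C : M₂C = ((2 * π : ℝ) : ℂ) •
      (Matrix.diagonal xt * Cmat B (vopt B rhohat) * (Matrix.diagonal xt).conjTranspose))
    (lamT lamC : Fin (2 * B + 1) → ℝ)
    (hlamTmono : ∀ i j : Fin (2 * B + 1), i ≤ j → lamT j ≤ lamT i)
    (hlamCmono : ∀ i j : Fin (2 * B + 1), i ≤ j → lamC j ≤ lamC i)
    (hlamTchar : (Tmat B rhohat).charpoly =
      ∏ i : Fin (2 * B + 1), (Polynomial.X - Polynomial.C ((lamT i : ℝ) : ℂ)))
    (hlamCchar : (Cmat B (vopt B rhohat)).charpoly =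
      ∏ i : Fin (2 * B + 1), (Polynomial.X - Polynomial.C ((lamC i : ℝ) : ℂ)))
    (κ : Fin (2 * B + 1))
    (hκT : Module.finrank ℂ
      (Module.End.eigenspace (Matrix.mulVecLin (Tmat B rhohat)) ((lamT κ : ℝ) : ℂ)) = 1)
    (hκC : Module.finrank ℂ
      (Module.End.eigenspace (Matrix.mulVecLin (Cmat B (vopt B rhohat))) ((lamC κ : ℝ) : ℂ)) = 1)
    (δκ : ℝ)
    (hδκ : δκ = max
      (sInf {r : ℝ | ∃ j : Fin (2 * B + 1), j ≠ κ ∧ r = |lamC κ - lamT j|})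
      (sInf {r : ℝ | ∃ j : Fin (2 * B + 1), j ≠ κ ∧ r = |lamC j - lamT κ|}))
    (hgap : SB B rhohat ≤ δκ ^ 2)
    (vT : Fin (2 * B + 1) → ℂ)
    (hvT : M₂.mulVec vT = ((2 * π * lamT κ : ℝ) : ℂ) • vT)
    (hvTnorm : ∑ i, ‖vT i‖ ^ 2 = 1)
    (l : ℕ) (hl : l < 2 * B + 1)
    (vC : Fin (2 * B + 1) → ℂ)
    (hvC : ∀ i, vC i = ((1 / Real.sqrt ((2 * B + 1 : ℕ) : ℝ) : ℝ) : ℂ) *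
      Complex.exp (-((phase B l i : ℝ) : ℂ) * Complex.I) * xt i)
    (hvCeig : M₂C.mulVec vC = ((2 * π * lamC κ : ℝ) : ℂ) • vC)
    (hvCnorm : ∑ i, ‖vC i‖ ^ 2 = 1)
    (β : ℂ) (hβ : ‖β‖ = 1)
    (xtest : Fin (2 * B + 1) → ℂ)
    (hxtest : ∀ i, xtest i = β * ((Real.sqrt ((2 * B + 1 : ℕ) : ℝ) : ℝ) : ℂ) * vT i)
    (hpos : ∃ r : ℝ, 0 ≤ r ∧
      ∑ i, conj (xtest i) * (Complex.exp (-((phase B l i : ℝ) : ℂ) * Complex.I) * xt i) =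
        (r : ℂ)) :
    ∑ i, ‖((Real.sqrt (‖xhat i‖ ^ 2) : ℝ) : ℂ) * xtest i -
        Complex.exp (-((phase B l i : ℝ) : ℂ) * Complex.I) * xhat i‖ ^ 2 ≤
      2 * ((2 * B + 1 : ℕ) : ℝ) * Pmax * (1 - Real.sqrt (1 - SB B rhohat / δκ ^ 2)) := by
  have : Nontrivial (Fin (2 * B + 1)) := Fin.nontrivial_iff_two_le.2 (by omega)
  have hx0 (i : Fin (2 * B + 1)) : ((‖xhat i‖ : ℝ) : ℂ) ≠ 0 := by simpa using hxnv i
  subst hM₂ hM₂C hδκ hPmax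
  rw [← frobenius_norm_Tmat_sub_Cmat_vopt_sq] at hgap ⊢
  rw [Complex.ofReal_mul (2 * π)] at hvT hvCeig
  simp_rw [Real.sqrt_sq (norm_nonneg _)]
  exact stmt_5_general (Tmat_isHermitian hρsym) (Cmat_vopt_isHermitian hρsym) hlamTmono hlamCmono
    hlamTchar hlamCchar hκT hκC hgap (fun i => by simp [hxt, hxnv])
    (fun i => by rw [hxt]; exact (mul_div_cancel₀ _ (hx0 i)).symm)
    (fun i => by rw [← Complex.ofReal_neg, Complex.norm_exp_ofReal_mul_I])
    (fun i => Finset.le_sup' (fun i => ‖xhat i‖ ^ 2) (Finset.mem_univ i))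
    (Complex.ofReal_ne_zero.2 Real.two_pi_pos.ne') hvT hvTnorm hvC hvCeig hβ hxtest hpos
end

section
/- Let v ∈ ℂⁿ, let V ∈ ℂ^{Q×n} have all Q rows equal to v, and let x̃ ∈ ℂ^I with |x̃[k,q]| = 1 for all (k,q) ∈ I. Set M = 2π·D_x̃·BC(V)·D_x̃*. If λ ≠ 0 is an eigenvalue of M whose eigenspace is one-dimensional and u ∈ ℂ^I is a unit-norm eigenvector of M for λ, then there exist l ∈ {0,…,n−1} and α ∈ ℂ with |α| = 1 such that u[k,q] = (α/√(nQ))·e^{−ι2πlk/n}·x̃[k,q] for all (k,q) ∈ I. -/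
open Complex Real ComplexConjugate

/-- The block-circulant matrix `BC(V)[(k₁,q₁),(k₂,q₂)] = V[(q₁-q₂) mod Q, (k₁-k₂) mod n]`. -/
noncomputable def BCmat (B Q : ℕ) (V : Matrix (Fin Q) (Fin (2 * B + 1)) ℂ) :
    Matrix (Fin (2 * B + 1) × Fin Q) (Fin (2 * B + 1) × Fin Q) ℂ :=
  Matrix.of fun p₁ p₂ => V (p₁.2 - p₂.2) (p₁.1 - p₂.1)

/-!
Conjugating by the unitary matrix `D_x̃` reduces the problem to the matrix `2π BC(V)`, which is a
circulant over the group `ℤ/n × ℤ/Q`. Circulants commute with translations, so every translate of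
an eigenvector `y` lies in the eigenspace of `y`; as that is a line, `y` is a multiple of a
character of the group. Since the rows of `V` agree, `BC(V) y` does not depend on the second
coordinate, and for `λ ≠ 0` neither does `y`: the character comes from `ℤ/n`, so it is
`k ↦ e^{-ι2πlk/n}` up to the unimodular factor caused by indexing from `k = -B`.
-/

section Eigenspace

open Module.End

theorem exists_smul_eq_of_finrank_eigenspace_eq_one {K W : Type*} [Field K] [AddCommGroup W]
    [Module K W] {f : Module.End K W} {μ : K} (hdim : Module.finrank K (eigenspace f μ) = 1)
    {u w : W} (hu : HasEigenvector f μ u) (hw : w ∈ eigenspace f μ) : ∃ c : K, c • u = w := by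
  have hu_ne : (⟨u, hu.1⟩ : eigenspace f μ) ≠ 0 := fun h ↦ hu.2 (congrArg Subtype.val h)
  obtain ⟨c, hc⟩ := (finrank_eq_one_iff_of_nonzero' _ hu_ne).1 hdim ⟨w, hw⟩
  exact ⟨c, congrArg Subtype.val hc⟩

theorem eigenspace_conj {R W W' : Type*} [CommRing R] [AddCommGroup W] [Module R W]
    [AddCommGroup W'] [Module R W'] (e : W ≃ₗ[R] W') (f : Module.End R W) (μ : R) :
    eigenspace (e.conj f) μ = (eigenspace f μ).map (e : W →ₗ[R] W') := by
  ext w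
  rw [Submodule.mem_map_equiv, mem_eigenspace_iff, mem_eigenspace_iff, LinearEquiv.conj_apply_apply,
    ← LinearEquiv.eq_symm_apply, map_smul]

end Eigenspace

section Unitary

open Matrix

variable {ι : Type*} [Fintype ι] [DecidableEq ι]

theorem mulVecLin_unitary_conj {R : Type*} [CommRing R] [StarRing R] (U : unitaryGroup ι R)
    (A : Matrix ι ι R) :
    (U.1 * A * U.1ᴴ).mulVecLin = (UnitaryGroup.toLinearEquiv U).conj A.mulVecLin := by
  rw [mulVecLin_mul, mulVecLin_mul]
  rfl

theorem diagonal_mem_unitaryGroup_s12 {𝕜 : Type*} [RCLike 𝕜] {x : ι → 𝕜} (hx : ∀ i, ‖x i‖ = 1) :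
    diagonal x ∈ unitaryGroup ι 𝕜 := by
  rw [mem_unitaryGroup_iff, star_eq_conjTranspose, diagonal_conjTranspose, diagonal_mul_diagonal,
    ← diagonal_one]
  congr 1
  ext i
  simp [RCLike.mul_conj, hx i]

end Unitary

section Circulant

open Matrix Module.End

theorem exists_addChar_of_add_eq_mul {G K : Type*} [AddMonoid G] [CommMonoidWithZero K]
    [IsCancelMulZero K] {y : G → K} (hy : y ≠ 0) (h : ∀ g, ∃ c, ∀ x, y (x + g) = c * y x) :
    ∃ χ : AddChar G K, ∀ x, y x = y 0 * χ x := by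
  choose c hc using h
  have y_eq (g : G) : y g = c g * y 0 := by simpa using hc g 0
  have y_zero_ne : y 0 ≠ 0 := fun h0 ↦ hy (funext fun g ↦ by simp [y_eq g, h0])
  refine ⟨⟨c, mul_right_cancel₀ y_zero_ne ?_, fun g h ↦ mul_right_cancel₀ y_zero_ne ?_⟩, fun x ↦ ?_⟩
  · rw [← y_eq, one_mul]
  · rw [← y_eq, hc, y_eq, mul_left_comm, mul_assoc]
  · exact (y_eq x).trans (mul_comm _ _)

theorem circulant_mulVec_translate {G R : Type*} [AddGroup G] [Fintype G]
    [NonUnitalNonAssocSemiring R] (w y : G → R) (g x : G) :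
    (circulant w *ᵥ fun z ↦ y (z + g)) x = (circulant w *ᵥ y) (x + g) :=
  Fintype.sum_equiv (Equiv.addRight g) _ _ fun z ↦ by simp [circulant_apply]

theorem exists_addChar_of_hasEigenvector_circulant {G K : Type*} [AddGroup G] [Fintype G] [Field K]
    {w : G → K} {μ : K} (hdim : Module.finrank K (eigenspace (circulant w).mulVecLin μ) = 1)
    {y : G → K} (hy : HasEigenvector (circulant w).mulVecLin μ y) :
    ∃ χ : AddChar G K, ∀ x, y x = y 0 * χ x := by
  refine exists_addChar_of_add_eq_mul hy.2 fun g ↦ ?_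
  have translate_mem : (fun z ↦ y (z + g)) ∈ eigenspace (circulant w).mulVecLin μ := by
    rw [mem_eigenspace_iff]
    ext x
    exact (circulant_mulVec_translate w y g x).trans (congrFun hy.apply_eq_smul (x + g))
  obtain ⟨c, hc⟩ := exists_smul_eq_of_finrank_eigenspace_eq_one hdim hy translate_mem
  exact ⟨c, fun x ↦ (congrFun hc x).symm⟩

theorem apply_eq_of_mem_eigenspace_circulant_comp_fst {G H K : Type*} [Sub G] [Sub H] [Fintype G]
    [Fintype H] [CommRing K] [IsDomain K] {v : G → K} {μ : K} (hμ : μ ≠ 0) {y : G × H → K}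
    (hy : y ∈ eigenspace (circulant (v ∘ Prod.fst : G × H → K)).mulVecLin μ) (g : G) (h h' : H) :
    y (g, h) = y (g, h') := by
  have mulVec_eq := congrFun (mem_eigenspace_iff.1 hy)
  refine mul_left_cancel₀ hμ ?_
  calc μ * y (g, h) = (circulant (v ∘ Prod.fst) *ᵥ y) (g, h) := (mulVec_eq (g, h)).symm
    _ = (circulant (v ∘ Prod.fst) *ᵥ y) (g, h') := rfl
    _ = μ * y (g, h') := mulVec_eq (g, h')

variable {G H : Type*} [AddGroup G] [AddGroup H] [Fintype G] [Fintype H]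

theorem exists_addChar_of_hasEigenvector_circulant_comp_fst {K : Type*} [Field K] {v : G → K}
    {μ : K} (hμ : μ ≠ 0)
    (hdim : Module.finrank K
      (eigenspace (circulant (v ∘ Prod.fst : G × H → K)).mulVecLin μ) = 1)
    {y : G × H → K}
    (hy : HasEigenvector (circulant (v ∘ Prod.fst : G × H → K)).mulVecLin μ y) :
    ∃ ψ : AddChar G K, ∀ p, y p = y 0 * ψ p.1 := by
  obtain ⟨χ, hχ⟩ := exists_addChar_of_hasEigenvector_circulant hdim hy
  refine ⟨χ.compAddMonoidHom (AddMonoidHom.inl G H), fun p ↦ ?_⟩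
  exact (apply_eq_of_mem_eigenspace_circulant_comp_fst hμ hy.1 p.1 p.2 0).trans (hχ (p.1, 0))

theorem exists_addChar_of_hasEigenvector_diagonal_conj_circulant {𝕜 : Type*} [RCLike 𝕜]
    [DecidableEq G] [DecidableEq H] {v : G → 𝕜} {x : G × H → 𝕜} (hx : ∀ p, ‖x p‖ = 1) {μ : 𝕜}
    (hμ : μ ≠ 0)
    (hdim : Module.finrank 𝕜 (eigenspace
      (diagonal x * circulant (v ∘ Prod.fst) * (diagonal x)ᴴ).mulVecLin μ) = 1)
    {u : G × H → 𝕜}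
    (hu : HasEigenvector (diagonal x * circulant (v ∘ Prod.fst) * (diagonal x)ᴴ).mulVecLin μ u) :
    ∃ (ψ : AddChar G 𝕜) (a : 𝕜), ∀ p, u p = a * ψ p.1 * x p := by
  let U : unitaryGroup (G × H) 𝕜 := ⟨diagonal x, diagonal_mem_unitaryGroup_s12 hx⟩
  let e := UnitaryGroup.toLinearEquiv U
  have eigenspace_eq :
      eigenspace (diagonal x * circulant (v ∘ Prod.fst) * (diagonal x)ᴴ).mulVecLin μ =
        (eigenspace (circulant (v ∘ Prod.fst)).mulVecLin μ).map (e : (G × H → 𝕜) →ₗ[𝕜] _) := by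
    rw [← eigenspace_conj, ← mulVecLin_unitary_conj]
  rw [eigenspace_eq, LinearEquiv.finrank_map_eq] at hdim
  obtain ⟨y, hy_mem, rfl⟩ := eigenspace_eq.le hu.1
  have hy_ne : y ≠ 0 := fun h ↦ hu.2 (by rw [h, map_zero])
  obtain ⟨ψ, hψ⟩ := exists_addChar_of_hasEigenvector_circulant_comp_fst hμ hdim ⟨hy_mem, hy_ne⟩
  refine ⟨ψ, y 0, fun p ↦ ?_⟩
  rw [← hψ, mul_comm]
  exact mulVec_diagonal x y p

end Circulant

theorem sqrt_card_mul_eq_one_of_sum_norm_sq_eq_one {ι E : Type*} [Fintype ι]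
    [SeminormedAddCommGroup E] {u : ι → E} {r : ℝ} (hur : ∀ i, ‖u i‖ = r)
    (hu : ∑ i, ‖u i‖ ^ 2 = 1) : √(Fintype.card ι) * r = 1 := by
  obtain ⟨i, -⟩ : (Finset.univ : Finset ι).Nonempty :=
    Finset.nonempty_of_sum_ne_zero (hu.trans_ne one_ne_zero)
  have hr : 0 ≤ r := hur i ▸ norm_nonneg _
  have card_mul_sq : Fintype.card ι * r ^ 2 = 1 := by simpa [hur] using hu
  rw [← Real.sqrt_sq hr, ← Real.sqrt_mul (Nat.cast_nonneg _), card_mul_sq, Real.sqrt_one]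

section Cyclic

open Fin.NatCast Fin.CommRing in
theorem fin_val_nsmul_one {n : ℕ} [NeZero n] (i : Fin n) : (i : ℕ) • (1 : Fin n) = i := by
  rw [nsmul_one, Fin.cast_val_eq_self]

theorem exists_eq_exp_of_addChar_fin {n : ℕ} [NeZero n] (ψ : AddChar (Fin n) ℂ) :
    ∃ l < n, ∀ i, ψ i = exp (-(2 * π * l * (i : ℕ) / n) * I) := by
  have generator_pow : (ψ 1)⁻¹ ^ n = 1 := by
    rw [inv_pow, ← ψ.map_nsmul_eq_pow, inv_eq_one]
    simpa using congrArg ψ (card_nsmul_eq_zero (G := Fin n) (x := 1))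
  obtain ⟨l, hl, hlψ⟩ :=
    (Complex.isPrimitiveRoot_exp n (NeZero.ne n)).eq_pow_of_pow_eq_one generator_pow
  refine ⟨l, hl, fun i ↦ ?_⟩
  calc ψ i = ψ 1 ^ (i : ℕ) := by
        rw [← ψ.map_nsmul_eq_pow, fin_val_nsmul_one]
    _ = exp (-(2 * π * l * (i : ℕ) / n) * I) := by
        rw [← inv_inv (ψ 1), ← hlψ, ← Complex.exp_nat_mul, ← Complex.exp_neg, ← Complex.exp_nat_mul]
        congr 1
        ring

theorem exists_eq_mul_exp_phase_of_addChar_fin {B : ℕ} (ψ : AddChar (Fin (2 * B + 1)) ℂ) :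
    ∃ l < 2 * B + 1, ∃ β : ℂ, ‖β‖ = 1 ∧ ∀ i, ψ i = β * exp (-(phase B l i : ℂ) * I) := by
  obtain ⟨l, hl, hψ⟩ := exists_eq_exp_of_addChar_fin ψ
  refine ⟨l, hl, exp ((-(2 * π * l * B / (2 * B + 1 : ℕ)) : ℝ) * I),
    Complex.norm_exp_ofReal_mul_I _, fun i ↦ ?_⟩
  rw [hψ, ← Complex.exp_add]
  congr 1
  simp only [phase]
  push_cast
  ring

end Cyclic

theorem BCmat_eq_circulant {B Q : ℕ} {V : Matrix (Fin Q) (Fin (2 * B + 1)) ℂ}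
    {v : Fin (2 * B + 1) → ℂ} (hV : ∀ q j, V q j = v j) :
    BCmat B Q V = Matrix.circulant (v ∘ Prod.fst) := by
  ext p₁ p₂
  exact hV _ _

/-- any unit-norm eigenvector of `M = 2π D_x̃ BC(V) D_x̃*` for a nonzero
eigenvalue with a one-dimensional eigenspace equals `(α/√(nQ))·e^{-ι2πlk/n}·x̃[k,q]`
for some `l ∈ {0,…,n-1}` and unimodular `α`. -/
theorem stmt_12 (B Q : ℕ) (hB : 1 ≤ B) (hQ : 1 ≤ Q)
    (v : Fin (2 * B + 1) → ℂ)
    (V : Matrix (Fin Q) (Fin (2 * B + 1)) ℂ)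
    (hV : ∀ (q : Fin Q) (j : Fin (2 * B + 1)), V q j = v j)
    (xt : Fin (2 * B + 1) × Fin Q → ℂ) (hxt : ∀ p, ‖xt p‖ = 1)
    (M : Matrix (Fin (2 * B + 1) × Fin Q) (Fin (2 * B + 1) × Fin Q) ℂ)
    (hM : M = ((2 * π : ℝ) : ℂ) •
      (Matrix.diagonal xt * BCmat B Q V * (Matrix.diagonal xt).conjTranspose))
    (lam : ℂ) (hlam : lam ≠ 0)
    (hdim : Module.finrank ℂ (Module.End.eigenspace (Matrix.mulVecLin M) lam) = 1)
    (u : Fin (2 * B + 1) × Fin Q → ℂ)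
    (hu : M.mulVec u = lam • u)
    (hunorm : ∑ p, ‖u p‖ ^ 2 = 1) :
    ∃ l < 2 * B + 1, ∃ α : ℂ, ‖α‖ = 1 ∧
      ∀ p : Fin (2 * B + 1) × Fin Q,
        u p = α / ((Real.sqrt (((2 * B + 1) * Q : ℕ) : ℝ) : ℝ) : ℂ) *
          Complex.exp (-((phase B l p.1 : ℝ) : ℂ) * Complex.I) * xt p := by
  have : NeZero Q := ⟨by omega⟩
  have hM_circulant : M = Matrix.diagonal xt * Matrix.circulant ((((2 * π : ℝ) : ℂ) • v) ∘ Prod.fst)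
      * (Matrix.diagonal xt).conjTranspose := by
    rw [hM, BCmat_eq_circulant hV, ← smul_mul_assoc, ← mul_smul_comm, ← Matrix.circulant_smul]
    rfl
  subst hM_circulant
  have hu_ne : u ≠ 0 := by
    rintro rfl
    simp at hunorm
  obtain ⟨ψ, a, hua⟩ := exists_addChar_of_hasEigenvector_diagonal_conj_circulant hxt hlam hdim
    ⟨Module.End.mem_eigenspace_iff.2 hu, hu_ne⟩
  obtain ⟨l, hl, β, hβ, hψ⟩ := exists_eq_mul_exp_phase_of_addChar_fin ψ
  have ha : √((2 * B + 1) * Q : ℕ) * ‖a‖ = 1 := by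
    simpa only [Fintype.card_prod, Fintype.card_fin] using
      sqrt_card_mul_eq_one_of_sum_norm_sq_eq_one
        (fun p ↦ by simp [hua, hxt, ψ.norm_apply] : ∀ p, ‖u p‖ = ‖a‖) hunorm
  have hsqrt : (√((2 * B + 1) * Q : ℕ) : ℂ) ≠ 0 :=
    Complex.ofReal_ne_zero.2 (left_ne_zero_of_mul_eq_one ha)
  refine ⟨l, hl, √((2 * B + 1) * Q : ℕ) * (a * β), ?_, fun p ↦ ?_⟩
  · rw [norm_mul, norm_mul, hβ, mul_one, Complex.norm_of_nonneg (Real.sqrt_nonneg _), ha]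
  · rw [mul_div_cancel_left₀ _ hsqrt, hua, hψ, ← mul_assoc a]
end

section
/- Let x̃ ∈ ℂ^I satisfy x̃[−k,q] = conj(x̃[k,q]) and let ρ̂ : {−2B,…,2B} → ℂ satisfy ρ̂[−k] = conj(ρ̂[k]); set M₂ = 2π·D_x̃·𝒯_ρ·D_x̃*. (i) If v ∈ ℂ^I satisfies M₂v = λv with λ ∈ ℝ, then the vector v′ defined by v′[k,q] = conj(v[−k,q]) also satisfies M₂v′ = λv′. (ii) If in addition the eigenspace of λ is one-dimensional and v[0,0] is a nonzero real number, then v[k,q] = conj(v[−k,q]) for all (k,q) ∈ I. -/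
/-! Write `σ` for the flip `(k,q) ↦ (-k,q)`. The symmetries of `x̃` and `ρ̂` say that applying `σ`
to the indices of `M₂` conjugates its entries, so `M₂` commutes with the conjugate-linear map
`v ↦ v'`, `v'[p] = conj v[σ p]`, which therefore preserves the eigenspace of a real `λ`. If that
eigenspace is a line, then a coordinate that does not vanish on it is injective on it; since `σ`
fixes `(0,0)`, the vectors `v` and `v'` agree at `(0,0)` when `v[0,0]` is real, hence everywhere. -/

open Complex Real ComplexConjugate

/-- The block matrix `𝒯_ρ[(k₁,q₁),(k₂,q₂)] = ρ̂[k₁ - k₂]`, with the `k`-index represented by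
`i : Fin (2B+1)` via `k = i - B`, and the `q`-index by `Fin Q`. -/
noncomputable def Tmat2 (B Q : ℕ) (rhohat : ℤ → ℂ) :
    Matrix (Fin (2 * B + 1) × Fin Q) (Fin (2 * B + 1) × Fin Q) ℂ :=
  Matrix.of fun p₁ p₂ => rhohat (((p₁.1 : ℕ) : ℤ) - ((p₂.1 : ℕ) : ℤ))

section ConjFlip

variable {ι R : Type*} [CommSemiring R] [StarRing R] {σ : Equiv.Perm ι}

/-- The conjugate flip `v'[p] = conj v[σ p]` of a vector `v` along a permutation `σ` of its
indices. -/
def conjFlip (σ : Equiv.Perm ι) (v : ι → R) : ι → R :=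
  fun p => conj (v (σ p))

theorem conjFlip_smul (c : R) (v : ι → R) : conjFlip σ (c • v) = conj c • conjFlip σ v :=
  funext fun _ => map_mul _ _ _

/-- Conjugation-equivariance of a matrix `M` along a permutation `σ`: `M[σ p, σ r] = conj M[p, r]`.
It is the entrywise form of `M` commuting with `conjFlip σ`. -/
def IsConjEquivariant (σ : Equiv.Perm ι) (M : Matrix ι ι R) : Prop :=
  M.submatrix σ σ = M.map conj

namespace IsConjEquivariant

variable {M N : Matrix ι ι R}

theorem diagonal [DecidableEq ι] {x : ι → R} (hx : ∀ p, x (σ p) = conj (x p)) :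
    IsConjEquivariant σ (Matrix.diagonal x) := by
  rw [IsConjEquivariant, Matrix.submatrix_diagonal_equiv, Matrix.diagonal_map (map_zero _)]
  exact congrArg Matrix.diagonal (funext hx)

theorem conjTranspose (hM : IsConjEquivariant σ M) : IsConjEquivariant σ M.conjTranspose := by
  rw [IsConjEquivariant, ← Matrix.conjTranspose_submatrix, hM]
  rfl

theorem smul {c : R} (hc : conj c = c) (hM : IsConjEquivariant σ M) :
    IsConjEquivariant σ (c • M) := by
  rw [IsConjEquivariant, Matrix.submatrix_smul, Pi.smul_apply, Pi.smul_apply, hM,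
    Matrix.map_smul' _ _ _ (map_mul _), hc]

variable [Fintype ι]

theorem mul (hM : IsConjEquivariant σ M) (hN : IsConjEquivariant σ N) :
    IsConjEquivariant σ (M * N) := by
  rw [IsConjEquivariant, ← Matrix.submatrix_mul_equiv M N σ σ σ, hM, hN, Matrix.map_mul]

theorem mulVec_conjFlip (hM : IsConjEquivariant σ M) (v : ι → R) :
    M.mulVec (conjFlip σ v) = conjFlip σ (M.mulVec v) := by
  funext p
  have hentry (r : ι) : M p r = conj (M (σ p) (σ r)) := by
    rw [← Matrix.submatrix_apply M σ σ, hM, Matrix.map_apply, starRingEnd_self_apply]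
  calc ∑ r, M p r * conj (v (σ r))
      = ∑ r, conj (M (σ p) (σ r) * v (σ r)) := by simp only [hentry, map_mul]
    _ = ∑ r, conj (M (σ p) r * v r) := Equiv.sum_comp σ fun r => conj (M (σ p) r * v r)
    _ = conj (∑ r, M (σ p) r * v r) := (map_sum _ _ _).symm

theorem mulVec_conjFlip_eq_smul (hM : IsConjEquivariant σ M) {c : R} (hc : conj c = c) {v : ι → R}
    (hv : M.mulVec v = c • v) : M.mulVec (conjFlip σ v) = c • conjFlip σ v := by
  rw [hM.mulVec_conjFlip, hv, conjFlip_smul, hc]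

end IsConjEquivariant

end ConjFlip

theorem eq_of_finrank_eq_one_of_apply_eq {K V V' : Type*} [DivisionRing K] [AddCommGroup V]
    [Module K V] [AddCommGroup V'] [Module K V'] {W : Submodule K V} (hW : Module.finrank K W = 1)
    (f : V →ₗ[K] V') {v w : V} (hv : v ∈ W) (hw : w ∈ W) (hfv : f v ≠ 0) (hvw : f v = f w) :
    v = w := by
  have : IsSimpleModule K W := isSimpleModule_iff_finrank_eq_one.mpr hW
  have hf : f.domRestrict W ≠ 0 := fun h => hfv (LinearMap.congr_fun h ⟨v, hv⟩)
  have hinj := (LinearMap.injective_or_eq_zero (f.domRestrict W)).resolve_right hf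
  exact congrArg Subtype.val (hinj (a₁ := ⟨v, hv⟩) (a₂ := ⟨w, hw⟩) hvw)

theorem IsConjEquivariant.eq_conjFlip_of_finrank_eigenspace_eq_one {ι K : Type*} [Fintype ι]
    [Field K] [StarRing K] {σ : Equiv.Perm ι} {M : Matrix ι ι K} (hM : IsConjEquivariant σ M)
    {c : K} (hc : conj c = c) (hdim : Module.finrank K (Module.End.eigenspace M.mulVecLin c) = 1)
    {v : ι → K} (hv : M.mulVec v = c • v) {i : ι} (hσi : σ i = i) (hvi : conj (v i) = v i)
    (hvi₀ : v i ≠ 0) : v = conjFlip σ v := by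
  have hagree : v i = conjFlip σ v i := by rw [conjFlip, hσi, hvi]
  exact eq_of_finrank_eq_one_of_apply_eq hdim (LinearMap.proj i)
    (Module.End.mem_eigenspace_iff.mpr hv)
    (Module.End.mem_eigenspace_iff.mpr (hM.mulVec_conjFlip_eq_smul hc hv)) hvi₀ hagree

section Flip

variable {B Q : ℕ}

theorem negIdx_involutive : Function.Involutive (negIdx B) := fun i =>
  Fin.ext (Nat.sub_sub_self (Nat.le_of_lt_succ i.isLt))

theorem negIdx_mid (hB : B < 2 * B + 1) : negIdx B ⟨B, hB⟩ = ⟨B, hB⟩ :=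
  Fin.ext (by simp only [negIdx]; omega)

theorem intCast_negIdx (i : Fin (2 * B + 1)) : ((negIdx B i : ℕ) : ℤ) = 2 * B - (i : ℕ) := by
  simp only [negIdx]; omega

/-- The flip `(k,q) ↦ (-k,q)` as a permutation of the index set. -/
def flipPerm (B Q : ℕ) : Equiv.Perm (Fin (2 * B + 1) × Fin Q) :=
  negIdx_involutive.toPerm.prodCongr (Equiv.refl (Fin Q))

theorem flipPerm_mid (hB : B < 2 * B + 1) (q : Fin Q) :
    flipPerm B Q (⟨B, hB⟩, q) = (⟨B, hB⟩, q) :=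
  Prod.ext (negIdx_mid hB) rfl

theorem isConjEquivariant_Tmat2 {rhohat : ℤ → ℂ}
    (hρ : ∀ k ∈ Finset.Icc (-(2 * B : ℤ)) (2 * B : ℤ), rhohat (-k) = conj (rhohat k)) :
    IsConjEquivariant (flipPerm B Q) (Tmat2 B Q rhohat) := by
  ext ⟨i, _⟩ ⟨j, _⟩
  have hmem : ((i : ℕ) : ℤ) - (j : ℕ) ∈ Finset.Icc (-(2 * B : ℤ)) (2 * B : ℤ) := by
    rw [Finset.mem_Icc]; omega
  calc rhohat ((negIdx B i : ℕ) - (negIdx B j : ℕ))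
      = rhohat (-((i : ℕ) - (j : ℕ))) := by
        rw [intCast_negIdx, intCast_negIdx, sub_sub_sub_cancel_left, neg_sub]
    _ = conj (rhohat ((i : ℕ) - (j : ℕ))) := hρ _ hmem

end Flip

/-- with conjugate-symmetric `x̃` and `ρ̂`, (i) eigenvectors of
`M₂ = 2π D_x̃ 𝒯_ρ D_x̃*` are stable under the conjugate-flip `v'[k,q] = conj (v[-k,q])`, and
(ii) an eigenvector for a one-dimensional eigenspace with `v[0,0]` real and nonzero satisfies
`v[k,q] = conj (v[-k,q])`. -/
theorem stmt_14 (B Q : ℕ) (hB : 1 ≤ B) (hQ : 1 ≤ Q)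
    (xt : Fin (2 * B + 1) × Fin Q → ℂ)
    (hxtsym : ∀ p : Fin (2 * B + 1) × Fin Q, xt (negIdx B p.1, p.2) = conj (xt p))
    (rhohat : ℤ → ℂ)
    (hρsym : ∀ k ∈ Finset.Icc (-(2 * B : ℤ)) (2 * B : ℤ), rhohat (-k) = conj (rhohat k))
    (M₂ : Matrix (Fin (2 * B + 1) × Fin Q) (Fin (2 * B + 1) × Fin Q) ℂ)
    (hM₂ : M₂ = ((2 * π : ℝ) : ℂ) •
      (Matrix.diagonal xt * Tmat2 B Q rhohat * (Matrix.diagonal xt).conjTranspose))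
    (lam : ℝ) :
    (∀ v : Fin (2 * B + 1) × Fin Q → ℂ, M₂.mulVec v = ((lam : ℝ) : ℂ) • v →
      M₂.mulVec (fun p => conj (v (negIdx B p.1, p.2))) =
        ((lam : ℝ) : ℂ) • (fun p => conj (v (negIdx B p.1, p.2)))) ∧
    (∀ v : Fin (2 * B + 1) × Fin Q → ℂ, M₂.mulVec v = ((lam : ℝ) : ℂ) • v →
      Module.finrank ℂ (Module.End.eigenspace (Matrix.mulVecLin M₂) ((lam : ℝ) : ℂ)) = 1 →
      (v (⟨B, by omega⟩, ⟨0, by omega⟩)).im = 0 → v (⟨B, by omega⟩, ⟨0, by omega⟩) ≠ 0 →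
      ∀ p, v p = conj (v (negIdx B p.1, p.2))) := by
  have hD : IsConjEquivariant (flipPerm B Q) (Matrix.diagonal xt) := .diagonal hxtsym
  have hM : IsConjEquivariant (flipPerm B Q) M₂ :=
    hM₂ ▸ ((hD.mul (isConjEquivariant_Tmat2 hρsym)).mul hD.conjTranspose).smul (conj_ofReal _)
  refine ⟨fun v hv => hM.mulVec_conjFlip_eq_smul (conj_ofReal lam) hv,
    fun v hv hdim him hne => congrFun ?_⟩
  exact hM.eq_conjFlip_of_finrank_eigenspace_eq_one (conj_ofReal lam) hdim hv
    (flipPerm_mid _ _) (conj_eq_iff_im.mpr him) hne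
end
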